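/- arXiv:2106.14353 — 2 statements merged into one kernel-verified Lean document; each statement's English description precedes it below -/
import Mathlib

section
/- Let δ ∈ (0,2), λ > 0 with δλ ∈ (0,2), and let z > 0. Then the improper integral lim_{T→∞} ∫₀^T e^{i z t} (1 − t^{δλ}/(1+t^{δ})^{λ}) dt exists and equals i ∫₀^∞ e^{−z r} ( 1 − e^{iπδλ/2} r^{δλ} / (1 + e^{iπδ/2} r^{δ})^{λ} ) dr (rotation of the contour of integration from the positive real axis to the positive imaginary axis). -/
/-!
If `f` is continuous on the closed first quadrant, holomorphic inside it and vanishes at infinity,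
then by Cauchy's theorem the integral of `e^{izw} f w` around the square with opposite corners `0`
and `T + iT` is zero. As `T → ∞` the two outer edges disappear: `|e^{izw}| = e^{-z Im w}` is at most
`e^{-zT}` on the top edge and has mass at most `1/z` on the right edge, where moreover `f → 0`.

The Dagum function continues to the closed first quadrant because `0 ≤ arg (w^δ) < π` there, so that
`1 + w^δ` avoids the branch cut. For the decay, write `v = w^δ` and `1 + v = v (1 + v⁻¹)`: since
`arg v ≥ 0 ≥ arg (1 + v⁻¹)`, powers of this product split, and the quotient `v^λ / (1 + v)^λ` is
`(1 + v⁻¹)^{-λ}`, which tends to `1`.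
-/

open MeasureTheory Set Filter intervalIntegral

/-- The Dagum function with parameters `lam > 0`, `δ > 0`:
`D_{λ,δ}(r) = 1 - (r^δ/(1+r^δ))^λ`. -/
noncomputable def dagum (lam δ r : ℝ) : ℝ := 1 - (r ^ δ / (1 + r ^ δ)) ^ lam

/-- The Dagum integrand rotated to the positive imaginary axis:
`1 - e^{iπδλ/2} r^{δλ} / (1 + e^{iπδ/2} r^δ)^λ`, principal branch powers. -/
noncomputable def dagumRot (lam δ : ℝ) (r : ℝ) : ℂ :=
  1 - Complex.exp (Complex.I * Real.pi * (δ * lam) / 2) * (r : ℂ) ^ ((δ * lam : ℝ) : ℂ) /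
      (1 + Complex.exp (Complex.I * Real.pi * δ / 2) * (r : ℂ) ^ ((δ : ℝ) : ℂ)) ^ ((lam : ℝ) : ℂ)

section QuadrantRotation

open Complex Bornology Topology Interval

lemma eventually_forall_norm_le_of_tendsto_cobounded {X Y : Type*} [SeminormedAddCommGroup X]
    [SeminormedAddCommGroup Y] {f : X → Y} {s : Set X}
    (hf : Tendsto f (cobounded X ⊓ 𝓟 s) (𝓝 0)) {ε : ℝ} (hε : 0 < ε) :
    ∀ᶠ R : ℝ in atTop, ∀ x ∈ s, R ≤ ‖x‖ → ‖f x‖ ≤ ε := by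
  have hfε : ∀ᶠ x in cobounded X ⊓ 𝓟 s, ‖f x‖ < ε := by
    simpa using hf.eventually (Metric.ball_mem_nhds 0 hε)
  obtain ⟨R₀, -, hR₀⟩ := (hasBasis_cobounded_norm.inf_principal s).eventually_iff.1 hfε
  filter_upwards [eventually_ge_atTop R₀] with R hR x hxs hx
  exact (hR₀ ⟨hR.trans hx, hxs⟩).le

lemma norm_exp_I_mul_ofReal_mul (z : ℝ) (w : ℂ) : ‖exp (I * z * w)‖ = Real.exp (-z * w.im) := by
  simp [norm_exp]

lemma norm_exp_neg_ofReal_mul (z r : ℝ) : ‖exp (-(z * r))‖ = Real.exp (-z * r) := by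
  simp [norm_exp]

lemma add_mul_I_mem_quadrant {x y : ℝ} (hx : 0 ≤ x) (hy : 0 ≤ y) :
    (x + y * I : ℂ) ∈ Ici 0 ×ℂ Ici 0 := by
  simp [mem_reProdIm, hx, hy]

lemma mul_I_mem_quadrant {r : ℝ} (hr : 0 ≤ r) : (r * I : ℂ) ∈ Ici 0 ×ℂ Ici 0 := by
  simpa using add_mul_I_mem_quadrant le_rfl hr

variable {E : Type*} [NormedAddCommGroup E] [NormedSpace ℂ E] {f : ℂ → E} {z : ℝ}

lemma integrableOn_exp_neg_mul_smul_of_isBigO_one {g : ℝ → E} (hg : ContinuousOn g (Ici 0))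
    (hbdd : g =O[atTop] fun _ => (1 : ℝ)) (hz : 0 < z) :
    IntegrableOn (fun r : ℝ => exp (-(z * r)) • g r) (Ioi 0) := by
  have hcont : ContinuousOn (fun r : ℝ => exp (-(z * r)) • g r) (Ici 0) :=
    ContinuousOn.smul (by fun_prop) hg
  have hexp : (fun r : ℝ => exp (-(z * r))) =O[atTop] fun r => Real.exp (-z * r) :=
    .of_norm_le fun r => (norm_exp_neg_ofReal_mul z r).le
  refine ((hcont.locallyIntegrableOn measurableSet_Ici).integrableOn_of_isBigO_atTop
    (g := fun r => Real.exp (-z * r)) ?_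
    ⟨Ioi 0, Ioi_mem_atTop 0, exp_neg_integrableOn_Ioi 0 hz⟩).mono_set Ioi_subset_Ici_self
  simpa using hexp.smul hbdd

lemma continuousOn_quadrant_of_diffContOnCl (hf : DiffContOnCl ℂ f (Ioi 0 ×ℂ Ioi 0)) :
    ContinuousOn f (Ici 0 ×ℂ Ici 0) := by
  simpa only [closure_reProdIm, closure_Ioi] using hf.continuousOn

lemma integrableOn_exp_neg_mul_smul_mul_I (hf : DiffContOnCl ℂ f (Ioi 0 ×ℂ Ioi 0))
    (hdecay : Tendsto f (cobounded ℂ ⊓ 𝓟 (Ici 0 ×ℂ Ici 0)) (𝓝 0)) (hz : 0 < z) :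
    IntegrableOn (fun r : ℝ => exp (-(z * r)) • f (r * I)) (Ioi 0) := by
  have hcont : ContinuousOn (fun r : ℝ => f (r * I)) (Ici 0) :=
    (continuousOn_quadrant_of_diffContOnCl hf).comp (by fun_prop) fun r => mul_I_mem_quadrant
  refine integrableOn_exp_neg_mul_smul_of_isBigO_one hcont (.of_bound 1 ?_) hz
  filter_upwards [eventually_forall_norm_le_of_tendsto_cobounded hdecay one_pos,
    eventually_ge_atTop 0] with r hfr hr
  simpa using hfr (r * I) (mul_I_mem_quadrant hr) (by simp [abs_of_nonneg hr])

lemma integral_ofReal_eq_of_diffContOnCl_quadrant (hf : DiffContOnCl ℂ f (Ioi 0 ×ℂ Ioi 0)) {T : ℝ}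
    (hT : 0 ≤ T) :
    ∫ t in (0 : ℝ)..T, f t =
      I • (∫ r in (0 : ℝ)..T, f (r * I)) +
        ((∫ x in (0 : ℝ)..T, f (x + T * I)) - I • ∫ y in (0 : ℝ)..T, f (T + y * I)) := by
  have hsquare := integral_boundary_rect_eq_zero_of_continuousOn_of_differentiableOn f 0
    (T + T * I) ((continuousOn_quadrant_of_diffContOnCl hf).mono ?_)
    (hf.differentiableOn.mono ?_)
  · simp only [zero_re, zero_im, ofReal_zero, zero_mul, add_zero, zero_add, add_re, add_im,
      ofReal_re, ofReal_im, re_ofReal_mul, im_ofReal_mul, I_re, I_im, mul_zero, mul_one]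
      at hsquare
    rw [← sub_eq_zero, ← hsquare]
    abel
  · intro w hw
    simp_all [mem_reProdIm]
  · intro w hw
    simp_all [mem_reProdIm]

lemma tendsto_integral_top_edge (hdecay : Tendsto f (cobounded ℂ ⊓ 𝓟 (Ici 0 ×ℂ Ici 0)) (𝓝 0))
    (hz : 0 < z) :
    Tendsto (fun T : ℝ => ∫ x in (0 : ℝ)..T, exp (I * z * (x + T * I)) • f (x + T * I))
      atTop (𝓝 0) := by
  have hlim : Tendsto (fun T : ℝ => T * Real.exp (-z * T)) atTop (𝓝 0) := by
    simpa using tendsto_rpow_mul_exp_neg_mul_atTop_nhds_zero 1 z hz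
  refine squeeze_zero_norm' ?_ hlim
  filter_upwards [eventually_forall_norm_le_of_tendsto_cobounded hdecay one_pos,
    eventually_ge_atTop 0] with T hfT hT
  have hpointwise : ∀ x ∈ Ι 0 T,
      ‖exp (I * z * (x + T * I)) • f (x + T * I)‖ ≤ Real.exp (-z * T) := by
    intro x hx
    rw [uIoc_of_le hT] at hx
    have hTnorm : T ≤ ‖(x + T * I : ℂ)‖ := by
      simpa using im_le_norm (x + T * I : ℂ)
    rw [norm_smul, norm_exp_I_mul_ofReal_mul]
    simpa using mul_le_of_le_one_right (Real.exp_pos (-z * T)).le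
      (hfT _ (add_mul_I_mem_quadrant hx.1.le hT) hTnorm)
  simpa [abs_of_nonneg hT, mul_comm] using
    intervalIntegral.norm_integral_le_of_norm_le_const hpointwise

lemma tendsto_integral_right_edge (hdecay : Tendsto f (cobounded ℂ ⊓ 𝓟 (Ici 0 ×ℂ Ici 0)) (𝓝 0))
    (hz : 0 < z) :
    Tendsto (fun T : ℝ => ∫ y in (0 : ℝ)..T, exp (I * z * (T + y * I)) • f (T + y * I))
      atTop (𝓝 0) := by
  have hexp : IntegrableOn (fun y => Real.exp (-z * y)) (Ioi 0) := exp_neg_integrableOn_Ioi 0 hz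
  suffices hlittleO :
      (fun T : ℝ => ∫ y in (0 : ℝ)..T, exp (I * z * (T + y * I)) • f (T + y * I)) =o[atTop]
        fun _ => ∫ y in Ioi 0, Real.exp (-z * y) from
    hlittleO.tendsto_zero_of_tendsto tendsto_const_nhds
  refine .of_bound fun ε hε => ?_
  filter_upwards [eventually_forall_norm_le_of_tendsto_cobounded hdecay hε,
    eventually_ge_atTop 0] with T hfT hT
  have hpointwise : ∀ y ∈ Ioc 0 T,
      ‖exp (I * z * (T + y * I)) • f (T + y * I)‖ ≤ ε * Real.exp (-z * y) := by
    intro y hy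
    have hTnorm : T ≤ ‖(T + y * I : ℂ)‖ := by
      simpa using re_le_norm (T + y * I : ℂ)
    rw [norm_smul, norm_exp_I_mul_ofReal_mul, mul_comm]
    simpa using mul_le_mul_of_nonneg_right
      (hfT _ (add_mul_I_mem_quadrant hT hy.1.le) hTnorm) (Real.exp_pos (-z * y)).le
  calc ‖∫ y in (0 : ℝ)..T, exp (I * z * (T + y * I)) • f (T + y * I)‖
      ≤ ∫ y in (0 : ℝ)..T, ε * Real.exp (-z * y) :=
        intervalIntegral.norm_integral_le_of_norm_le hT (ae_of_all _ hpointwise)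
          (Continuous.intervalIntegrable (by fun_prop) _ _)
    _ = ε * ∫ y in Ioc 0 T, Real.exp (-z * y) := by
        rw [intervalIntegral.integral_const_mul, integral_of_le hT]
    _ ≤ ε * ∫ y in Ioi 0, Real.exp (-z * y) :=
        mul_le_mul_of_nonneg_left (setIntegral_mono_set hexp
          (.of_forall fun y => (Real.exp_pos _).le) Ioc_subset_Ioi_self.eventuallyLE) hε.le
    _ ≤ ε * ‖∫ y in Ioi 0, Real.exp (-z * y)‖ :=
        mul_le_mul_of_nonneg_left (Real.le_norm_self _) hε.le

theorem tendsto_integral_exp_smul_of_diffContOnCl_quadrant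
    (hf : DiffContOnCl ℂ f (Ioi 0 ×ℂ Ioi 0))
    (hdecay : Tendsto f (cobounded ℂ ⊓ 𝓟 (Ici 0 ×ℂ Ici 0)) (𝓝 0)) (hz : 0 < z) :
    Tendsto (fun T : ℝ => ∫ t in (0 : ℝ)..T, exp (I * z * t) • f t) atTop
      (𝓝 (I • ∫ r in Ioi (0 : ℝ), exp (-(z * r)) • f (r * I))) := by
  have hleft := intervalIntegral_tendsto_integral_Ioi 0
    (integrableOn_exp_neg_mul_smul_mul_I hf hdecay hz) tendsto_id
  have hsum := (hleft.const_smul I).add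
    ((tendsto_integral_top_edge hdecay hz).sub
      ((tendsto_integral_right_edge hdecay hz).const_smul I))
  rw [smul_zero, sub_zero, add_zero] at hsum
  refine hsum.congr' ?_
  filter_upwards [eventually_ge_atTop 0] with T hT
  have hphase (r : ℝ) : I * z * (r * I) = -(z * r) := by
    linear_combination (z * r : ℂ) * I_mul_I
  have hexp : Differentiable ℂ fun w : ℂ => exp (I * z * w) := by fun_prop
  have hcauchy := integral_ofReal_eq_of_diffContOnCl_quadrant (hexp.diffContOnCl.smul hf) hT
  simp only [hphase] at hcauchy
  exact hcauchy.symm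

end QuadrantRotation

section ComplexPowers

open Complex

lemma mul_cpow_of_arg_add_mem_Ioc {x y : ℂ} (h : arg x + arg y ∈ Ioc (-Real.pi) Real.pi) (s : ℂ) :
    (x * y) ^ s = x ^ s * y ^ s := by
  rcases eq_or_ne s 0 with rfl | hs
  · simp
  rcases eq_or_ne x 0 with rfl | hx
  · simp [hs]
  rcases eq_or_ne y 0 with rfl | hy
  · simp [hs]
  rw [cpow_def_of_ne_zero (mul_ne_zero hx hy), cpow_def_of_ne_zero hx, cpow_def_of_ne_zero hy,
    log_mul hx hy h, add_mul, exp_add]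

lemma one_add_mem_slitPlane {v : ℂ} (hv : arg v ≠ Real.pi) : 1 + v ∈ slitPlane := by
  rcases eq_or_ne v 0 with rfl | hv0
  · simp
  · rcases mem_slitPlane_iff.1 (mem_slitPlane_iff_arg.2 ⟨hv, hv0⟩) with hre | him
    · exact .inl (by simpa using by linarith)
    · exact .inr (by simpa using him)

lemma one_add_cpow_of_arg_mem_Ico {v : ℂ} (hv : v ≠ 0) (harg : arg v ∈ Ico 0 Real.pi) (s : ℂ) :
    (1 + v) ^ s = v ^ s * (1 + v⁻¹) ^ s := by
  have hfactor : 1 + v = v * (1 + v⁻¹) := by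
    rw [mul_add, mul_inv_cancel₀ hv, mul_one, add_comm]
  have hslit : 1 + v⁻¹ ∈ slitPlane :=
    one_add_mem_slitPlane (by rw [arg_inv, if_neg harg.2.ne]; linarith [harg.1, Real.pi_pos])
  have harg_factor : arg (1 + v⁻¹) ≤ 0 := by
    have harg_conj := arg_conj (1 + v⁻¹)
    rw [if_neg (slitPlane_arg_ne_pi hslit)] at harg_conj
    rw [← neg_nonneg, ← harg_conj, arg_nonneg_iff]
    simpa using div_nonneg (arg_nonneg_iff.1 harg.1) (normSq_nonneg v)
  rw [hfactor, mul_cpow_of_arg_add_mem_Ioc]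
  exact ⟨by linarith [harg.1, neg_pi_lt_arg (1 + v⁻¹)], by linarith [arg_le_pi v]⟩

lemma arg_cpow_ofReal {w : ℂ} {a : ℝ} (hw : w ≠ 0)
    (h : arg w * a ∈ Ioc (-Real.pi) Real.pi) : arg (w ^ (a : ℂ)) = arg w * a := by
  rw [cpow_ofReal]
  exact_mod_cast arg_mul_cos_add_sin_mul_I (Real.rpow_pos_of_pos (norm_pos_iff.2 hw) a) h

lemma arg_mul_mem_Ico_of_mem_quadrant {w : ℂ} (hw : w ∈ Ici 0 ×ℂ Ici 0) {a : ℝ}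
    (ha : a ∈ Ico 0 2) : arg w * a ∈ Ico 0 Real.pi := by
  have harg_nonneg : 0 ≤ arg w := arg_nonneg_iff.2 hw.2
  have harg_le : arg w ≤ Real.pi / 2 := arg_le_pi_div_two_iff.2 (.inl hw.1)
  exact ⟨mul_nonneg harg_nonneg ha.1, by nlinarith [Real.pi_pos, ha.1, ha.2]⟩

lemma arg_cpow_mem_Ico_of_mem_quadrant {w : ℂ} (hw : w ∈ Ici 0 ×ℂ Ici 0) {a : ℝ}
    (ha : a ∈ Ico 0 2) : arg (w ^ (a : ℂ)) ∈ Ico 0 Real.pi := by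
  have harg := arg_mul_mem_Ico_of_mem_quadrant hw ha
  rcases eq_or_ne w 0 with rfl | hw0
  · rcases eq_or_ne a 0 with rfl | _ <;> simp_all [Real.pi_pos]
  · rwa [arg_cpow_ofReal hw0 ⟨by linarith [harg.1, Real.pi_pos], harg.2.le⟩]

lemma tendsto_cpow_ofReal_cobounded {a : ℝ} (ha : 0 < a) :
    Tendsto (fun w : ℂ => w ^ (a : ℂ)) (Bornology.cobounded ℂ) (Bornology.cobounded ℂ) := by
  rw [← tendsto_norm_atTop_iff_cobounded]
  simp only [norm_cpow_real]
  exact (tendsto_rpow_atTop ha).comp tendsto_norm_cobounded_atTop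

lemma ofReal_mul_I_cpow {r : ℝ} (hr : 0 ≤ r) (a : ℝ) :
    (r * I : ℂ) ^ (a : ℂ) = exp (I * Real.pi * a / 2) * (r : ℂ) ^ (a : ℂ) := by
  have harg : arg (r : ℂ) + arg I ∈ Ioc (-Real.pi) Real.pi := by
    rw [arg_ofReal_of_nonneg hr, arg_I]
    constructor <;> linarith [Real.pi_pos]
  rw [mul_cpow_of_arg_add_mem_Ioc harg, cpow_def_of_ne_zero I_ne_zero, log_I, mul_comm]
  ring_nf

end ComplexPowers

section Dagum

open Complex Bornology Topology

/-- The Dagum function of a complex argument, with principal branch powers. The power of the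
quotient is distributed as in `dagumRot`, which fixes the branch off the positive real axis. -/
noncomputable def complexDagum (lam δ : ℝ) (w : ℂ) : ℂ :=
  1 - w ^ ((δ * lam : ℝ) : ℂ) / (1 + w ^ (δ : ℂ)) ^ (lam : ℂ)

variable {lam δ : ℝ}

lemma complexDagum_ofReal {t : ℝ} (ht : 0 ≤ t) : complexDagum lam δ t = dagum lam δ t := by
  have htδ : 0 ≤ t ^ δ := Real.rpow_nonneg ht δ
  have hden : (0 : ℝ) ≤ 1 + t ^ δ := by positivity
  rw [complexDagum, dagum, Real.div_rpow htδ hden, ← Real.rpow_mul ht]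
  push_cast [ofReal_cpow ht, ofReal_cpow hden]
  rfl

lemma complexDagum_ofReal_mul_I {r : ℝ} (hr : 0 ≤ r) :
    complexDagum lam δ (r * I) = dagumRot lam δ r := by
  rw [complexDagum, dagumRot, ofReal_mul_I_cpow hr, ofReal_mul_I_cpow hr, ofReal_mul]

lemma one_add_cpow_mem_slitPlane_of_mem_quadrant (hδ : δ ∈ Ico 0 2) {w : ℂ}
    (hw : w ∈ Ici 0 ×ℂ Ici 0) : 1 + w ^ (δ : ℂ) ∈ slitPlane :=
  one_add_mem_slitPlane (arg_cpow_mem_Ico_of_mem_quadrant hw hδ).2.ne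

lemma complexDagum_eq_of_mem_quadrant (hδ : δ ∈ Ico 0 2) {w : ℂ} (hw : w ∈ Ici 0 ×ℂ Ici 0)
    (hw0 : w ≠ 0) :
    complexDagum lam δ w = 1 - ((1 + (w ^ (δ : ℂ))⁻¹) ^ (lam : ℂ))⁻¹ := by
  have hv0 : w ^ (δ : ℂ) ≠ 0 := by simp [cpow_eq_zero_iff, hw0]
  have harg := arg_mul_mem_Ico_of_mem_quadrant hw hδ
  have hpow : w ^ ((δ * lam : ℝ) : ℂ) = (w ^ (δ : ℂ)) ^ (lam : ℂ) := by
    rw [ofReal_mul, cpow_mul] <;> rw [im_mul_ofReal, log_im]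
    · linarith [harg.1, Real.pi_pos]
    · exact harg.2.le
  rw [complexDagum, hpow, one_add_cpow_of_arg_mem_Ico hv0 (arg_cpow_mem_Ico_of_mem_quadrant hw hδ),
    div_mul_cancel_left₀]
  simp [cpow_eq_zero_iff, hv0]

lemma diffContOnCl_complexDagum (hδ : δ ∈ Ioo 0 2) (hlam : 0 < lam) :
    DiffContOnCl ℂ (complexDagum lam δ) (Ioi 0 ×ℂ Ioi 0) := by
  have hbase {w : ℂ} (hw : w ∈ Ici 0 ×ℂ Ici 0) : 1 + w ^ (δ : ℂ) ∈ slitPlane :=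
    one_add_cpow_mem_slitPlane_of_mem_quadrant (Ioo_subset_Ico_self hδ) hw
  have hden {w : ℂ} (hw : w ∈ Ici 0 ×ℂ Ici 0) : (1 + w ^ (δ : ℂ)) ^ (lam : ℂ) ≠ 0 := by
    simp [cpow_eq_zero_iff, slitPlane_ne_zero (hbase hw)]
  constructor
  · intro w hw
    have hw' : w ∈ Ici 0 ×ℂ Ici 0 :=
      mem_reProdIm.2 ⟨Ioi_subset_Ici_self hw.1, Ioi_subset_Ici_self hw.2⟩
    have hpow (a : ℂ) : DifferentiableAt ℂ (fun w : ℂ => w ^ a) w :=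
      differentiableAt_id.cpow_const (.inl hw.1)
    exact (((hpow _).div (((hpow _).const_add 1).cpow_const (hbase hw')) (hden hw')).const_sub
      1).differentiableWithinAt
  · rw [closure_reProdIm, closure_Ioi]
    intro w hw
    have hpow {a : ℝ} (ha : 0 < a) : ContinuousAt (fun w : ℂ => w ^ (a : ℂ)) w :=
      continuousAt_cpow_const_of_re_pos (.inl hw.1) ha
    exact (continuousAt_const.sub ((hpow (mul_pos hδ.1 hlam)).div
      ((continuousAt_const.add (hpow hδ.1)).cpow continuousAt_const (hbase hw))
      (hden hw))).continuousWithinAt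

lemma tendsto_complexDagum_cobounded (hδ : δ ∈ Ioo 0 2) :
    Tendsto (complexDagum lam δ) (cobounded ℂ ⊓ 𝓟 (Ici 0 ×ℂ Ici 0)) (𝓝 0) := by
  have hcont : ContinuousAt (fun u : ℂ => 1 - ((1 + u) ^ (lam : ℂ))⁻¹) 0 :=
    continuousAt_const.sub (((continuousAt_const.add continuousAt_id).cpow continuousAt_const
      (by simp)).inv₀ (by simp))
  have hlim : Tendsto (fun w : ℂ => 1 - ((1 + (w ^ (δ : ℂ))⁻¹) ^ (lam : ℂ))⁻¹) (cobounded ℂ)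
      (𝓝 0) := by
    simpa [Function.comp_def] using hcont.tendsto.comp
      (tendsto_inv₀_cobounded.comp (tendsto_cpow_ofReal_cobounded hδ.1))
  refine (hlim.mono_left inf_le_left).congr' ?_
  filter_upwards [mem_inf_of_left (eventually_ne_cobounded 0),
    mem_inf_of_right (mem_principal_self _)] with w hw0 hw
  exact (complexDagum_eq_of_mem_quadrant (Ioo_subset_Ico_self hδ) hw hw0).symm

end Dagum

theorem dagum_contour_rotation_general (δ lam : ℝ) (hδ0 : 0 < δ) (hδ2 : δ < 2) (hlam : 0 < lam)
    (z : ℝ) (hz : 0 < z) :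
    IntegrableOn (fun r : ℝ => Complex.exp (-(z * r)) * dagumRot lam δ r) (Ioi 0) ∧
    Tendsto (fun T : ℝ =>
        ∫ t in (0 : ℝ)..T, Complex.exp (Complex.I * z * t) * (dagum lam δ t : ℂ))
      atTop
      (nhds (Complex.I * ∫ r in Ioi (0 : ℝ), Complex.exp (-(z * r)) * dagumRot lam δ r)) := by
  have hdiff := diffContOnCl_complexDagum ⟨hδ0, hδ2⟩ hlam
  have hdecay := tendsto_complexDagum_cobounded (lam := lam) ⟨hδ0, hδ2⟩
  have hrot : EqOn (fun r : ℝ => Complex.exp (-(z * r)) • complexDagum lam δ (r * Complex.I))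
      (fun r => Complex.exp (-(z * r)) * dagumRot lam δ r) (Ioi 0) := fun r hr => by
    simp only [complexDagum_ofReal_mul_I (le_of_lt hr), smul_eq_mul]
  refine ⟨(integrableOn_exp_neg_mul_smul_mul_I hdiff hdecay hz).congr_fun hrot
    measurableSet_Ioi, ?_⟩
  rw [← setIntegral_congr_fun measurableSet_Ioi hrot]
  refine (tendsto_integral_exp_smul_of_diffContOnCl_quadrant hdiff hdecay hz).congr' ?_
  filter_upwards [eventually_ge_atTop 0] with T hT
  refine intervalIntegral.integral_congr fun t ht => ?_
  rw [uIcc_of_le hT] at ht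
  simp only [complexDagum_ofReal ht.1, smul_eq_mul]

/-- Rotation of the contour from the positive real axis to the positive imaginary axis:
for `δ ∈ (0,2)`, `λ > 0` with `δλ ∈ (0,2)` and `z > 0`, the improper integral
`lim_{T→∞} ∫₀^T e^{izt} (1 - t^{δλ}/(1+t^δ)^λ) dt` exists and equals
`i ∫₀^∞ e^{-zr} (1 - e^{iπδλ/2} r^{δλ}/(1+e^{iπδ/2} r^δ)^λ) dr`. -/
theorem dagum_contour_rotation (δ lam : ℝ) (hδ0 : 0 < δ) (hδ2 : δ < 2)
    (hlam : 0 < lam) (hdl0 : 0 < δ * lam) (hdl2 : δ * lam < 2) (z : ℝ) (hz : 0 < z) :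
    IntegrableOn (fun r : ℝ => Complex.exp (-(z * r)) * dagumRot lam δ r) (Ioi 0) ∧
    Tendsto (fun T : ℝ =>
        ∫ t in (0 : ℝ)..T, Complex.exp (Complex.I * z * t) * (dagum lam δ t : ℂ))
      atTop
      (nhds (Complex.I * ∫ r in Ioi (0 : ℝ), Complex.exp (-(z * r)) * dagumRot lam δ r)) := by
  exact dagum_contour_rotation_general δ lam hδ0 hδ2 hlam z hz
end

section
/- Let d = 3, δ ∈ (1,2), λ > 0 with δλ ∈ (0,2]. Then for every z > 0 the improper integral \widehat{D}_3(z) = (1/(2π² z)) lim_{T→∞} ∫₀^T r sin(z r) D_{λ,δ}(r) dr exists, and z^{3−δ} \widehat{D}_3(z) → 2^{−δ} λ Γ((3−δ)/2) / ( π^{3/2} Γ(δ/2) ) as z → 0⁺. -/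
open MeasureTheory Set Filter intervalIntegral

/-! Integrating by parts against `(1 - cos (z r)) / z`, which vanishes at `r = 0`, turns
`∫₀^∞ F(r) sin (z r) dr` into `-z⁻¹ ∫₀^∞ F'(r) (1 - cos (z r)) dr`. If `r ^ δ F'(r)` is bounded and
tends to `L`, the second integral converges absolutely for `1 < δ < 3`, and after the substitution
`s = z r` dominated convergence shows that it is asymptotic to
`z ^ (δ - 1) L ∫₀^∞ s ^ (-δ) (1 - cos s) ds`. For `F(r) = r D(r)` one has `L = λ (1 - δ)`, because
`r ^ δ D(r) → λ`.

The constant is evaluated by writing `Γ(δ) s ^ (-δ)` as the Laplace transform of `t ^ (δ - 1)`: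
by Fubini, `Γ(δ) ∫₀^∞ s ^ (-δ) (1 - cos s) ds = ∫₀^∞ t ^ (δ - 2) / (1 + t ^ 2) dt`, and the same
device gives this beta-type integral. Legendre's duplication formula does the rest. -/

open scoped Topology

section Laplace

lemma integrableOn_rpow_mul_exp_neg_mul {a r : ℝ} (ha : 0 < a) (hr : 0 < r) :
    IntegrableOn (fun t : ℝ => t ^ (a - 1) * Real.exp (-(r * t))) (Ioi 0) := by
  refine Integrable.of_integral_ne_zero ?_
  rw [Real.integral_rpow_mul_exp_neg_mul_Ioi ha hr]
  have := Real.Gamma_pos_of_pos ha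
  positivity

variable {E : Type*} [NormedAddCommGroup E] [NormedSpace ℝ E]

lemma integral_rpow_mul_exp_neg_mul_smul [CompleteSpace E] {a s : ℝ} (ha : 0 < a) (hs : 0 < s)
    (y : E) :
    ∫ t in Ioi (0 : ℝ), (t ^ (a - 1) * Real.exp (-(s * t))) • y =
      Real.Gamma a • s ^ (-a) • y := by
  rw [_root_.integral_smul_const, Real.integral_rpow_mul_exp_neg_mul_Ioi ha hs, one_div,
    Real.inv_rpow hs.le, ← Real.rpow_neg hs.le, mul_comm, mul_smul]

lemma aestronglyMeasurable_of_rpow_smul {a : ℝ} {f : ℝ → E}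
    (hf : AEStronglyMeasurable (fun s => s ^ a • f s) (volume.restrict (Ioi 0))) :
    AEStronglyMeasurable f (volume.restrict (Ioi 0)) := by
  have hpow : Measurable fun s : ℝ => (s ^ a)⁻¹ := by fun_prop
  refine (hpow.aestronglyMeasurable.smul hf).congr ?_
  filter_upwards [ae_restrict_mem measurableSet_Ioi] with s hs
  exact inv_smul_smul₀ (Real.rpow_pos_of_pos hs a).ne' (f s)

lemma integrable_prod_rpow_mul_exp_neg_mul_smul {a : ℝ} (ha : 0 < a) {f : ℝ → E}
    (hf : IntegrableOn (fun s => s ^ (-a) • f s) (Ioi 0)) :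
    Integrable (fun p : ℝ × ℝ => (p.2 ^ (a - 1) * Real.exp (-(p.1 * p.2))) • f p.1)
      ((volume.restrict (Ioi 0)).prod (volume.restrict (Ioi 0))) := by
  have hmeas : Measurable fun p : ℝ × ℝ => p.2 ^ (a - 1) * Real.exp (-(p.1 * p.2)) := by fun_prop
  refine (integrable_prod_iff (hmeas.aestronglyMeasurable.smul
    (aestronglyMeasurable_of_rpow_smul hf.aestronglyMeasurable).comp_fst)).2 ⟨?_, ?_⟩
  · filter_upwards [ae_restrict_mem measurableSet_Ioi] with s hs
    exact (integrableOn_rpow_mul_exp_neg_mul ha hs).smul_const (f s)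
  · refine (hf.norm.const_mul (Real.Gamma a)).congr ?_
    filter_upwards [ae_restrict_mem measurableSet_Ioi] with s (hs : 0 < s)
    have hnorm : ∀ t ∈ Ioi (0 : ℝ), ‖(t ^ (a - 1) * Real.exp (-(s * t))) • f s‖ =
        (t ^ (a - 1) * Real.exp (-(s * t))) • ‖f s‖ := fun t (ht : 0 < t) => by
      rw [norm_smul, Real.norm_of_nonneg (by positivity), smul_eq_mul]
    simp only [Pi.smul_apply']
    rw [setIntegral_congr_fun measurableSet_Ioi hnorm, integral_rpow_mul_exp_neg_mul_smul ha hs,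
      norm_smul, Real.norm_of_nonneg (by positivity), smul_eq_mul, smul_eq_mul]

theorem Gamma_smul_integral_rpow_neg_smul [CompleteSpace E] {a : ℝ} (ha : 0 < a) {f : ℝ → E}
    (hf : IntegrableOn (fun s => s ^ (-a) • f s) (Ioi 0)) :
    Real.Gamma a • ∫ s in Ioi (0 : ℝ), s ^ (-a) • f s =
      ∫ t in Ioi (0 : ℝ), t ^ (a - 1) • ∫ s in Ioi (0 : ℝ), Real.exp (-(s * t)) • f s := by
  calc Real.Gamma a • ∫ s in Ioi (0 : ℝ), s ^ (-a) • f s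
    _ = ∫ s in Ioi (0 : ℝ), ∫ t in Ioi (0 : ℝ), (t ^ (a - 1) * Real.exp (-(s * t))) • f s := by
      rw [← MeasureTheory.integral_smul]
      exact setIntegral_congr_fun measurableSet_Ioi fun s hs =>
        (integral_rpow_mul_exp_neg_mul_smul ha hs (f s)).symm
    _ = ∫ t in Ioi (0 : ℝ), ∫ s in Ioi (0 : ℝ), (t ^ (a - 1) * Real.exp (-(s * t))) • f s :=
      integral_integral_swap (integrable_prod_rpow_mul_exp_neg_mul_smul ha hf)
    _ = ∫ t in Ioi (0 : ℝ), t ^ (a - 1) • ∫ s in Ioi (0 : ℝ), Real.exp (-(s * t)) • f s := by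
      simp only [mul_smul, MeasureTheory.integral_smul]

end Laplace

lemma integral_rpow_div_one_add {a : ℝ} (ha0 : 0 < a) (ha1 : a < 1) :
    ∫ x in Ioi (0 : ℝ), x ^ (a - 1) / (1 + x) = Real.Gamma a * Real.Gamma (1 - a) := by
  have hconv : IntegrableOn (fun s : ℝ => s ^ (-a) * Real.exp (-s)) (Ioi 0) := by
    simpa only [mul_comm, sub_sub_cancel_left] using Real.GammaIntegral_convergent (sub_pos.2 ha1)
  have hGamma : ∫ s in Ioi (0 : ℝ), s ^ (-a) * Real.exp (-s) = Real.Gamma (1 - a) := by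
    simp only [Real.Gamma_eq_integral (sub_pos.2 ha1), sub_sub_cancel_left, mul_comm]
  have hlaplace : ∀ t ∈ Ioi (0 : ℝ),
      ∫ s in Ioi (0 : ℝ), Real.exp (-(s * t)) * Real.exp (-s) = 1 / (1 + t) :=
    fun t (ht : 0 < t) => by
      have hexp := integral_exp_mul_Ioi (a := -(1 + t)) (by linarith) 0
      rw [mul_zero, Real.exp_zero, neg_div_neg_eq] at hexp
      rw [← hexp]
      refine setIntegral_congr_fun measurableSet_Ioi fun s _ => ?_
      rw [← Real.exp_add]
      ring_nf
  have hsub := Gamma_smul_integral_rpow_neg_smul ha0 hconv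
  simp only [smul_eq_mul] at hsub
  rw [hGamma] at hsub
  rw [hsub]
  exact setIntegral_congr_fun measurableSet_Ioi fun t ht => by
    simp only [hlaplace t ht, mul_one_div]

lemma integral_rpow_div_one_add_rpow {a p : ℝ} (ha : 0 < a) (hap : a < p) :
    ∫ t in Ioi (0 : ℝ), t ^ (a - 1) / (1 + t ^ p) =
      Real.Gamma (a / p) * Real.Gamma (1 - a / p) / p := by
  have hp : 0 < p := ha.trans hap
  rw [← integral_rpow_div_one_add (div_pos ha hp) ((div_lt_one hp).2 hap),
    ← integral_comp_rpow_Ioi_of_pos (g := fun x => x ^ (a / p - 1) / (1 + x)) hp,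
    ← MeasureTheory.integral_div]
  refine setIntegral_congr_fun measurableSet_Ioi fun t (ht : 0 < t) => ?_
  have hexp : a - 1 = (p - 1) + p * (a / p - 1) := by field_simp; ring
  simp only [smul_eq_mul]
  rw [hexp, Real.rpow_add ht, Real.rpow_mul ht.le]
  field_simp

lemma integrableOn_exp_neg_mul_cos {t : ℝ} (ht : 0 < t) :
    IntegrableOn (fun s : ℝ => Real.exp (-(s * t)) * Real.cos s) (Ioi 0) := by
  have hre : (-t + Complex.I : ℂ).re < 0 := by simpa using ht
  refine (integrableOn_exp_mul_complex_Ioi hre 0).re.congr (ae_of_all _ fun s => ?_)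
  simp [Complex.exp_re, mul_comm]

lemma integral_exp_neg_mul_cos {t : ℝ} (ht : 0 < t) :
    ∫ s in Ioi (0 : ℝ), Real.exp (-(s * t)) * Real.cos s = t / (1 + t ^ 2) := by
  have hre : (-t + Complex.I : ℂ).re < 0 := by simpa using ht
  calc ∫ s in Ioi (0 : ℝ), Real.exp (-(s * t)) * Real.cos s
    _ = ∫ s in Ioi (0 : ℝ), (Complex.exp ((-t + Complex.I) * s)).re := by
      simp [Complex.exp_re, mul_comm]
    _ = (∫ s in Ioi (0 : ℝ), Complex.exp ((-t + Complex.I) * s)).re :=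
      integral_re (integrableOn_exp_mul_complex_Ioi hre 0)
    _ = t / (1 + t ^ 2) := by
      rw [integral_exp_mul_complex_Ioi hre]
      simp [Complex.div_re, Complex.normSq_apply]
      ring

lemma integral_exp_neg_mul_one_sub_cos {t : ℝ} (ht : 0 < t) :
    ∫ s in Ioi (0 : ℝ), Real.exp (-(s * t)) * (1 - Real.cos s) = 1 / (t * (1 + t ^ 2)) := by
  have hneg : -t < 0 := neg_neg_of_pos ht
  have hexp : ∫ s in Ioi (0 : ℝ), Real.exp (-(s * t)) = 1 / t := by
    simpa [mul_comm] using integral_exp_mul_Ioi hneg 0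
  have hexp_int : IntegrableOn (fun s : ℝ => Real.exp (-(s * t))) (Ioi 0) := by
    simpa [mul_comm] using integrableOn_exp_mul_Ioi hneg 0
  simp only [mul_one_sub]
  rw [integral_sub hexp_int (integrableOn_exp_neg_mul_cos ht), hexp, integral_exp_neg_mul_cos ht]
  field_simp
  ring

lemma integrableOn_rpow_neg_mul_one_sub_cos {δ : ℝ} (h1 : 1 < δ) (h3 : δ < 3) :
    IntegrableOn (fun s : ℝ => s ^ (-δ) * (1 - Real.cos s)) (Ioi 0) := by
  have hcont : Continuous fun s : ℝ => 1 - Real.cos s := by fun_prop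
  have hnorm (s : ℝ) : ‖1 - Real.cos s‖ = 1 - Real.cos s :=
    Real.norm_of_nonneg (sub_nonneg.2 (Real.cos_le_one s))
  have htop : (fun s => 1 - Real.cos s) =O[atTop] fun s : ℝ => s ^ (-0 : ℝ) :=
    Asymptotics.IsBigO.of_bound 2 <| Eventually.of_forall fun s => by
      rw [hnorm, neg_zero, Real.rpow_zero, norm_one]
      linarith [Real.neg_one_le_cos s]
  have hzero : (fun s => 1 - Real.cos s) =O[𝓝[>] 0] fun s : ℝ => s ^ (-(-2) : ℝ) :=
    Asymptotics.IsBigO.of_bound (1 / 2) <| Eventually.of_forall fun s => by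
      rw [hnorm, neg_neg, Real.rpow_two, Real.norm_of_nonneg (sq_nonneg s)]
      linarith [Real.one_sub_sq_div_two_le_cos (x := s)]
  simpa only [sub_sub_cancel_left] using mellin_convergent_of_isBigO_scalar (s := 1 - δ)
    (hcont.locallyIntegrable.locallyIntegrableOn _) htop (by linarith) hzero (by linarith)

lemma Gamma_mul_integral_rpow_neg_mul_one_sub_cos {δ : ℝ} (h1 : 1 < δ) (h3 : δ < 3) :
    Real.Gamma δ * ∫ s in Ioi (0 : ℝ), s ^ (-δ) * (1 - Real.cos s) =
      Real.Gamma ((δ - 1) / 2) * Real.Gamma ((3 - δ) / 2) / 2 := by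
  calc Real.Gamma δ * ∫ s in Ioi (0 : ℝ), s ^ (-δ) * (1 - Real.cos s)
    _ = ∫ t in Ioi (0 : ℝ),
        t ^ (δ - 1) * ∫ s in Ioi (0 : ℝ), Real.exp (-(s * t)) * (1 - Real.cos s) :=
      Gamma_smul_integral_rpow_neg_smul (zero_lt_one.trans h1)
        (integrableOn_rpow_neg_mul_one_sub_cos h1 h3)
    _ = ∫ t in Ioi (0 : ℝ), t ^ (δ - 1 - 1) / (1 + t ^ (2 : ℝ)) :=
      setIntegral_congr_fun measurableSet_Ioi fun t (ht : 0 < t) => by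
        simp only [integral_exp_neg_mul_one_sub_cos ht, Real.rpow_sub_one ht.ne' (δ - 1),
          Real.rpow_two]
        field_simp
    _ = Real.Gamma ((δ - 1) / 2) * Real.Gamma ((3 - δ) / 2) / 2 := by
      rw [integral_rpow_div_one_add_rpow (by linarith) (by linarith)]
      ring_nf

theorem sub_one_mul_integral_rpow_neg_mul_one_sub_cos {δ : ℝ} (h1 : 1 < δ) (h3 : δ < 3) :
    (δ - 1) * ∫ s in Ioi (0 : ℝ), s ^ (-δ) * (1 - Real.cos s) =
      2 ^ (1 - δ) * √Real.pi * Real.Gamma ((3 - δ) / 2) / Real.Gamma (δ / 2) := by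
  have hΓδ := Real.Gamma_pos_of_pos (by linarith : 0 < δ)
  have hΓhalf := Real.Gamma_pos_of_pos (by linarith : 0 < δ / 2)
  have hduplication := Real.Gamma_mul_Gamma_add_half (δ / 2)
  rw [show δ / 2 + 1 / 2 = (δ - 1) / 2 + 1 by ring, Real.Gamma_add_one (by linarith),
    mul_div_cancel₀ δ two_ne_zero] at hduplication
  rw [eq_div_iff hΓhalf.ne']
  apply mul_left_cancel₀ hΓδ.ne'
  linear_combination
    (δ - 1) * Real.Gamma (δ / 2) * Gamma_mul_integral_rpow_neg_mul_one_sub_cos h1 h3 +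
      Real.Gamma ((3 - δ) / 2) * hduplication

lemma exists_norm_le_of_continuousOn_Ici_of_tendsto {E : Type*} [SeminormedAddCommGroup E]
    {g : ℝ → E} {a : ℝ} {L : E} (hg : ContinuousOn g (Ici a)) (hlim : Tendsto g atTop (𝓝 L)) :
    ∃ C, ∀ r ∈ Ici a, ‖g r‖ ≤ C := by
  obtain ⟨R, hR⟩ := eventually_atTop.1 (hlim.norm.eventually_le_const (lt_add_one ‖L‖))
  obtain ⟨M, hM⟩ := isCompact_Icc.exists_bound_of_continuousOn
    (hg.mono (Icc_subset_Ici_self : Icc a R ⊆ Ici a))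
  refine ⟨max M (‖L‖ + 1), fun r hr => ?_⟩
  rcases le_total r R with hrR | hRr
  · exact (hM r ⟨hr, hrR⟩).trans (le_max_left _ _)
  · exact (hR r hRr).trans (le_max_right _ _)

lemma tendsto_integral_comp_inv_mul_mul {g k : ℝ → ℝ} {C L : ℝ} (hg : ContinuousOn g (Ioi 0))
    (hgC : ∀ r ∈ Ioi (0 : ℝ), ‖g r‖ ≤ C) (hgL : Tendsto g atTop (𝓝 L))
    (hk : IntegrableOn k (Ioi 0)) :
    Tendsto (fun z => ∫ s in Ioi (0 : ℝ), g (z⁻¹ * s) * k s) (𝓝[>] 0)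
      (𝓝 (L * ∫ s in Ioi (0 : ℝ), k s)) := by
  rw [← MeasureTheory.integral_const_mul]
  refine tendsto_integral_filter_of_dominated_convergence (fun s => C * ‖k s‖) ?_ ?_
    (hk.norm.const_mul C) ?_
  · filter_upwards [self_mem_nhdsWithin] with z (hz : 0 < z)
    have hmaps : MapsTo (fun s => z⁻¹ * s) (Ioi 0) (Ioi 0) := fun s hs => mul_pos (inv_pos.2 hz) hs
    exact ((hg.comp (continuous_const_mul z⁻¹).continuousOn hmaps).aestronglyMeasurable
      measurableSet_Ioi).mul hk.aestronglyMeasurable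
  · filter_upwards [self_mem_nhdsWithin] with z (hz : 0 < z)
    filter_upwards [ae_restrict_mem measurableSet_Ioi] with s hs
    rw [norm_mul]
    gcongr
    exact hgC _ (mul_pos (inv_pos.2 hz) hs)
  · filter_upwards [ae_restrict_mem measurableSet_Ioi] with s hs
    exact (hgL.comp (tendsto_inv_nhdsGT_zero.atTop_mul_const hs)).mul_const (k s)

section Scaling
variable {f K : ℝ → ℝ} {δ z : ℝ}

lemma integrableOn_mul_comp_mul_left {C : ℝ}
    (hf : AEStronglyMeasurable f (volume.restrict (Ioi 0)))
    (hfC : ∀ r ∈ Ioi (0 : ℝ), ‖r ^ δ * f r‖ ≤ C)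
    (hK : IntegrableOn (fun s => s ^ (-δ) * K s) (Ioi 0)) (hz : 0 < z) :
    IntegrableOn (fun r => f r * K (z * r)) (Ioi 0) := by
  have hK' : IntegrableOn (fun r => (z * r) ^ (-δ) * K (z * r)) (Ioi 0) :=
    (integrableOn_Ioi_comp_mul_left_iff (fun s => s ^ (-δ) * K s) 0 hz).2 (by rwa [mul_zero])
  have hpow : Measurable fun r : ℝ => r ^ δ := by fun_prop
  refine ((hK'.bdd_mul (hpow.aestronglyMeasurable.mul hf)
    ((ae_restrict_iff' measurableSet_Ioi).2 (ae_of_all _ hfC))).const_mul (z ^ δ)).congr ?_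
  filter_upwards [ae_restrict_mem measurableSet_Ioi] with r (hr : 0 < r)
  rw [Pi.mul_apply, Real.mul_rpow hz.le hr.le, Real.rpow_neg hz.le, Real.rpow_neg hr.le]
  field_simp

lemma rpow_mul_integral_mul_comp_mul_left (f K : ℝ → ℝ) (δ : ℝ) (hz : 0 < z) :
    z ^ (1 - δ) * ∫ r in Ioi (0 : ℝ), f r * K (z * r) =
      ∫ s in Ioi (0 : ℝ), ((z⁻¹ * s) ^ δ * f (z⁻¹ * s)) * (s ^ (-δ) * K s) := by
  have hscale := integral_comp_mul_left_Ioi (fun s => f (z⁻¹ * s) * K s) 0 hz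
  simp only [inv_mul_cancel_left₀ hz.ne', mul_zero, smul_eq_mul] at hscale
  rw [hscale, ← mul_assoc, ← MeasureTheory.integral_const_mul]
  refine setIntegral_congr_fun measurableSet_Ioi fun s (hs : 0 < s) => ?_
  simp only [Real.mul_rpow (inv_pos.2 hz).le hs.le, Real.inv_rpow hz.le,
    Real.rpow_sub hz, Real.rpow_one, Real.rpow_neg hs.le]
  field_simp

end Scaling

lemma intervalIntegral_mul_sin {F f : ℝ → ℝ} {z T : ℝ} (hz : z ≠ 0) (hT : 0 ≤ T)
    (hFc : ContinuousOn F (Icc 0 T)) (hF : ∀ r ∈ Ioo 0 T, HasDerivAt F (f r) r)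
    (hf : IntervalIntegrable f volume 0 T) :
    ∫ r in (0 : ℝ)..T, F r * Real.sin (z * r) =
      F T * (1 - Real.cos (z * T)) / z -
        (∫ r in (0 : ℝ)..T, f r * (1 - Real.cos (z * r))) / z := by
  have hcos (r : ℝ) : HasDerivAt (fun r => (1 - Real.cos (z * r)) / z) (Real.sin (z * r)) r := by
    refine ((((hasDerivAt_id r).const_mul z).cos.const_sub 1).div_const z).congr_deriv ?_
    simp [hz]
  have hsin : Continuous fun r : ℝ => Real.sin (z * r) := by fun_prop
  have hcosc : Continuous fun r : ℝ => (1 - Real.cos (z * r)) / z := by fun_prop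
  rw [integral_mul_deriv_eq_deriv_mul_of_hasDerivAt (by rwa [uIcc_of_le hT]) hcosc.continuousOn
    (by rwa [min_eq_left hT, max_eq_right hT]) (fun r _ => hcos r) hf
    (hsin.intervalIntegrable 0 T)]
  simp [mul_div_assoc, ← intervalIntegral.integral_div]

lemma tendsto_intervalIntegral_mul_sin {F f : ℝ → ℝ} {z : ℝ} (hz : z ≠ 0)
    (hFc : ContinuousOn F (Ici 0)) (hF : ∀ r ∈ Ioi 0, HasDerivAt F (f r) r)
    (hF0 : Tendsto F atTop (𝓝 0)) (hf : ContinuousOn f (Ici 0))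
    (hfi : IntegrableOn (fun r => f r * (1 - Real.cos (z * r))) (Ioi 0)) :
    Tendsto (fun T => ∫ r in (0 : ℝ)..T, F r * Real.sin (z * r)) atTop
      (𝓝 (-(∫ r in Ioi (0 : ℝ), f r * (1 - Real.cos (z * r))) / z)) := by
  have hbdd : IsBoundedUnder (· ≤ ·) atTop (norm ∘ fun T => 1 - Real.cos (z * T)) :=
    isBoundedUnder_of ⟨2, fun T => by
      rw [Function.comp_apply, Real.norm_of_nonneg (sub_nonneg.2 (Real.cos_le_one _))]
      linarith [Real.neg_one_le_cos (z * T)]⟩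
  have hboundary := (hF0.zero_mul_isBoundedUnder_le hbdd).div_const z
  have hintegral := (intervalIntegral_tendsto_integral_Ioi 0 hfi tendsto_id).div_const z
  have hparts := hboundary.sub hintegral
  rw [zero_div, zero_sub, ← neg_div] at hparts
  refine hparts.congr' ?_
  filter_upwards [eventually_ge_atTop 0] with T hT
  have hf_int : IntervalIntegrable f volume 0 T :=
    ContinuousOn.intervalIntegrable_of_Icc hT (hf.mono Icc_subset_Ici_self)
  exact (intervalIntegral_mul_sin hz hT (hFc.mono Icc_subset_Ici_self)
    (fun r hr => hF r hr.1) hf_int).symm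

theorem exists_tendsto_integral_mul_sin_and_tendsto_rpow_mul {F f : ℝ → ℝ} {δ L : ℝ}
    (h1 : 1 < δ) (h3 : δ < 3)
    (hFc : ContinuousOn F (Ici 0)) (hF : ∀ r ∈ Ioi 0, HasDerivAt F (f r) r)
    (hF0 : Tendsto F atTop (𝓝 0)) (hf : ContinuousOn f (Ici 0))
    (hfL : Tendsto (fun r => r ^ δ * f r) atTop (𝓝 L)) :
    ∃ S : ℝ → ℝ,
      (∀ z, 0 < z →
        Tendsto (fun T => ∫ r in (0 : ℝ)..T, F r * Real.sin (z * r)) atTop (𝓝 (S z))) ∧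
      Tendsto (fun z => z ^ (2 - δ) * S z) (𝓝[>] 0)
        (𝓝 (-(L * ∫ s in Ioi (0 : ℝ), s ^ (-δ) * (1 - Real.cos s)))) := by
  have hpow : Continuous fun r : ℝ => r ^ δ := Real.continuous_rpow_const (by linarith)
  have hg : ContinuousOn (fun r => r ^ δ * f r) (Ici 0) := hpow.continuousOn.mul hf
  obtain ⟨C, hC⟩ := exists_norm_le_of_continuousOn_Ici_of_tendsto hg hfL
  have hC' : ∀ r ∈ Ioi (0 : ℝ), ‖r ^ δ * f r‖ ≤ C := fun r hr => hC r (Ioi_subset_Ici_self hr)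
  have hkernel := integrableOn_rpow_neg_mul_one_sub_cos h1 h3
  have hf_meas : AEStronglyMeasurable f (volume.restrict (Ioi 0)) :=
    (hf.mono Ioi_subset_Ici_self).aestronglyMeasurable measurableSet_Ioi
  refine ⟨fun z => -(∫ r in Ioi (0 : ℝ), f r * (1 - Real.cos (z * r))) / z, fun z hz => ?_, ?_⟩
  · exact tendsto_intervalIntegral_mul_sin hz.ne' hFc hF hF0 hf
      (integrableOn_mul_comp_mul_left hf_meas hC' hkernel hz)
  · refine (tendsto_integral_comp_inv_mul_mul (hg.mono Ioi_subset_Ici_self) hC' hfL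
      hkernel).neg.congr' ?_
    filter_upwards [self_mem_nhdsWithin] with z (hz : 0 < z)
    rw [← rpow_mul_integral_mul_comp_mul_left f (fun s => 1 - Real.cos s) δ hz,
      show 2 - δ = (1 - δ) + 1 by ring, Real.rpow_add_one hz.ne']
    field_simp

/-- The cumulative distribution function of the log-logistic law of unit scale and shape `δ`;
by definition, `dagum lam δ r = 1 - logLogisticCDF δ r ^ lam`. -/
noncomputable def logLogisticCDF (δ r : ℝ) : ℝ := r ^ δ / (1 + r ^ δ)

/-- The derivative of `r ↦ r * dagum lam δ r`, written so as to make sense at `r = 0` as well. -/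
noncomputable def mulDagumDeriv (lam δ r : ℝ) : ℝ :=
  dagum lam δ r - lam * δ * logLogisticCDF δ r ^ lam * (1 - logLogisticCDF δ r)

section Dagum
variable {lam δ r : ℝ}

lemma one_sub_logLogisticCDF (hr : 0 ≤ r) : 1 - logLogisticCDF δ r = (1 + r ^ δ)⁻¹ := by
  have hpos : 0 < 1 + r ^ δ := by positivity
  rw [logLogisticCDF, one_sub_div hpos.ne', add_sub_cancel_right, one_div]

lemma rpow_mul_one_sub_logLogisticCDF (hr : 0 ≤ r) :
    r ^ δ * (1 - logLogisticCDF δ r) = logLogisticCDF δ r := by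
  rw [one_sub_logLogisticCDF hr, logLogisticCDF, div_eq_mul_inv]

lemma hasDerivAt_logLogisticCDF (hr : 0 < r) :
    HasDerivAt (logLogisticCDF δ)
      (δ * logLogisticCDF δ r * (1 - logLogisticCDF δ r) / r) r := by
  have hpos : 0 < 1 + r ^ δ := by positivity
  have hpow := Real.hasDerivAt_rpow_const (p := δ) (Or.inl hr.ne')
  refine (hpow.div (hpow.const_add 1) hpos.ne').congr_deriv ?_
  rw [one_sub_logLogisticCDF hr.le, logLogisticCDF, Real.rpow_sub_one hr.ne']
  field_simp
  ring

lemma continuousOn_logLogisticCDF (hδ : 0 ≤ δ) : ContinuousOn (logLogisticCDF δ) (Ici 0) := by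
  have hpow : ContinuousOn (fun r : ℝ => r ^ δ) (Ici 0) :=
    (Real.continuous_rpow_const hδ).continuousOn
  exact hpow.div (continuousOn_const.add hpow) fun r (hr : 0 ≤ r) => by positivity

lemma tendsto_logLogisticCDF_atTop (hδ : 0 < δ) :
    Tendsto (logLogisticCDF δ) atTop (𝓝 1) := by
  have hinv : Tendsto (fun r : ℝ => (1 + r ^ δ)⁻¹) atTop (𝓝 0) :=
    tendsto_inv_atTop_zero.comp (tendsto_atTop_add_const_left _ 1 (tendsto_rpow_atTop hδ))
  have hsub := hinv.const_sub 1
  rw [sub_zero] at hsub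
  refine hsub.congr' ?_
  filter_upwards [eventually_ge_atTop 0] with r hr
  rw [← one_sub_logLogisticCDF hr, sub_sub_cancel]

lemma hasDerivAt_mul_dagum (hr : 0 < r) :
    HasDerivAt (fun r => r * dagum lam δ r) (mulDagumDeriv lam δ r) r := by
  have hq : 0 < logLogisticCDF δ r := by unfold logLogisticCDF; positivity
  have hdagum := ((hasDerivAt_logLogisticCDF (δ := δ) hr).rpow_const (p := lam)
    (Or.inl hq.ne')).const_sub 1
  refine ((hasDerivAt_id r).mul hdagum).congr_deriv ?_
  rw [mulDagumDeriv, Real.rpow_sub_one hq.ne', id, one_mul, dagum, ← logLogisticCDF]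
  field_simp
  ring

lemma continuousOn_dagum (hlam : 0 ≤ lam) (hδ : 0 ≤ δ) : ContinuousOn (dagum lam δ) (Ici 0) :=
  continuousOn_const.sub ((continuousOn_logLogisticCDF hδ).rpow_const fun _ _ => Or.inr hlam)

lemma continuousOn_mulDagumDeriv (hlam : 0 ≤ lam) (hδ : 0 ≤ δ) :
    ContinuousOn (mulDagumDeriv lam δ) (Ici 0) := by
  have hq := continuousOn_logLogisticCDF hδ
  exact (continuousOn_dagum hlam hδ).sub
    ((continuousOn_const.mul (hq.rpow_const fun _ _ => Or.inr hlam)).mul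
      (continuousOn_const.sub hq))

lemma tendsto_rpow_mul_dagum_atTop (hδ : 0 < δ) :
    Tendsto (fun r => r ^ δ * dagum lam δ r) atTop (𝓝 lam) := by
  have hq := tendsto_logLogisticCDF_atTop hδ
  have hq_ne : ∀ᶠ r in atTop, logLogisticCDF δ r ≠ 1 := by
    filter_upwards [eventually_ge_atTop 0] with r hr
    refine (sub_ne_zero.1 ?_).symm
    rw [one_sub_logLogisticCDF hr]
    positivity
  have hslope : Tendsto (slope (fun q : ℝ => q ^ lam) 1) (𝓝[≠] 1) (𝓝 lam) := by
    simpa using hasDerivAt_iff_tendsto_slope.1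
      (Real.hasDerivAt_rpow_const (x := 1) (p := lam) (Or.inl one_ne_zero))
  have hprod := hq.mul (hslope.comp (tendsto_nhdsWithin_iff.2 ⟨hq, hq_ne⟩))
  rw [one_mul] at hprod
  refine hprod.congr' ?_
  filter_upwards [eventually_ge_atTop 0, hq_ne] with r hr hqr
  have hqr' : logLogisticCDF δ r - 1 ≠ 0 := sub_ne_zero.2 hqr
  rw [Function.comp_apply, slope_def_field, Real.one_rpow, dagum, ← logLogisticCDF]
  nth_rewrite 1 [← rpow_mul_one_sub_logLogisticCDF hr]
  field_simp
  ring

lemma tendsto_rpow_mul_mulDagumDeriv_atTop (hδ : 0 < δ) :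
    Tendsto (fun r => r ^ δ * mulDagumDeriv lam δ r) atTop (𝓝 (lam * (1 - δ))) := by
  have hq := tendsto_logLogisticCDF_atTop hδ
  have hq_rpow : Tendsto (fun r => logLogisticCDF δ r ^ lam) atTop (𝓝 1) := by
    simpa using hq.rpow_const (p := lam) (Or.inl one_ne_zero)
  have hlim := (tendsto_rpow_mul_dagum_atTop (lam := lam) hδ).sub
    ((hq_rpow.const_mul (lam * δ)).mul hq)
  rw [mul_one, mul_one, ← mul_one_sub] at hlim
  refine hlim.congr' ?_
  filter_upwards [eventually_ge_atTop 0] with r hr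
  rw [mulDagumDeriv]
  linear_combination
    lam * δ * logLogisticCDF δ r ^ lam * rpow_mul_one_sub_logLogisticCDF (δ := δ) hr

lemma tendsto_mul_dagum_atTop (hδ : 1 < δ) :
    Tendsto (fun r => r * dagum lam δ r) atTop (𝓝 0) := by
  have hprod := (tendsto_rpow_neg_atTop (sub_pos.2 hδ)).mul
    (tendsto_rpow_mul_dagum_atTop (lam := lam) (zero_lt_one.trans hδ))
  rw [zero_mul] at hprod
  refine hprod.congr' ?_
  filter_upwards [eventually_gt_atTop 0] with r hr
  rw [← mul_assoc, ← Real.rpow_add hr, neg_sub, sub_add_cancel, Real.rpow_one]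

lemma dagum_low_frequency_constant (h1 : 1 < δ) (h3 : δ < 3) (lam : ℝ) :
    1 / (2 * Real.pi ^ 2) *
        -(lam * (1 - δ) * ∫ s in Ioi (0 : ℝ), s ^ (-δ) * (1 - Real.cos s)) =
      2 ^ (-δ) * lam * Real.Gamma ((3 - δ) / 2) /
        (Real.pi ^ ((3 : ℝ) / 2) * Real.Gamma (δ / 2)) := by
  have hpi : Real.pi ^ 2 = Real.pi ^ ((3 : ℝ) / 2) * √Real.pi := by
    rw [Real.sqrt_eq_rpow, ← Real.rpow_add Real.pi_pos, ← Real.rpow_two]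
    norm_num
  have htwo : (2 : ℝ) ^ (1 - δ) = 2 * 2 ^ (-δ) := by
    rw [sub_eq_add_neg, Real.rpow_add two_pos, Real.rpow_one]
  calc 1 / (2 * Real.pi ^ 2) *
        -(lam * (1 - δ) * ∫ s in Ioi (0 : ℝ), s ^ (-δ) * (1 - Real.cos s))
    _ = lam / (2 * Real.pi ^ 2) *
        ((δ - 1) * ∫ s in Ioi (0 : ℝ), s ^ (-δ) * (1 - Real.cos s)) := by ring
    _ = 2 ^ (-δ) * lam * Real.Gamma ((3 - δ) / 2) /
        (Real.pi ^ ((3 : ℝ) / 2) * Real.Gamma (δ / 2)) := by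
      rw [sub_one_mul_integral_rpow_neg_mul_one_sub_cos h1 h3, hpi, htwo]
      field_simp

end Dagum

theorem dagum_low_frequency_dim_three_general {δ lam : ℝ} (hδ1 : 1 < δ) (hδ3 : δ < 3)
    (hlam : 0 ≤ lam) :
    ∃ Dh : ℝ → ℝ,
      (∀ z : ℝ, 0 < z →
        Tendsto (fun T : ℝ =>
            (1 / (2 * Real.pi ^ 2 * z)) * ∫ r in (0 : ℝ)..T, r * Real.sin (z * r) * dagum lam δ r)
          atTop (𝓝 (Dh z))) ∧
      Tendsto (fun z : ℝ => z ^ (3 - δ) * Dh z) (𝓝[>] 0)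
        (𝓝 (2 ^ (-δ) * lam * Real.Gamma ((3 - δ) / 2) /
          (Real.pi ^ ((3 : ℝ) / 2) * Real.Gamma (δ / 2)))) := by
  have hδ0 : 0 < δ := zero_lt_one.trans hδ1
  obtain ⟨S, hS, hS_lim⟩ := exists_tendsto_integral_mul_sin_and_tendsto_rpow_mul
    hδ1 hδ3 (F := fun r => r * dagum lam δ r)
    (continuousOn_id.mul (continuousOn_dagum hlam hδ0.le)) (fun _ => hasDerivAt_mul_dagum)
    (tendsto_mul_dagum_atTop hδ1) (continuousOn_mulDagumDeriv hlam hδ0.le)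
    (tendsto_rpow_mul_mulDagumDeriv_atTop hδ0)
  refine ⟨fun z => 1 / (2 * Real.pi ^ 2 * z) * S z, fun z hz => ?_, ?_⟩
  · simp only [mul_right_comm _ (Real.sin _)]
    exact (hS z hz).const_mul _
  · rw [← dagum_low_frequency_constant hδ1 hδ3]
    refine (hS_lim.const_mul (1 / (2 * Real.pi ^ 2))).congr' ?_
    filter_upwards [self_mem_nhdsWithin] with z (hz : 0 < z)
    rw [show 3 - δ = (2 - δ) + 1 by ring, Real.rpow_add_one hz.ne']
    field_simp

/-- Low-frequency behaviour in dimension `d = 3` for `δ ∈ (1,2)`, `δλ ∈ (0,2]`: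
the improper integral `\widehat D_3(z) = (1/(2π²z)) lim_{T→∞} ∫₀^T r sin(zr) D_{λ,δ}(r) dr`
exists for every `z > 0`, and
`z^{3-δ} \widehat D_3(z) → 2^{-δ} λ Γ((3-δ)/2)/(π^{3/2} Γ(δ/2))` as `z → 0⁺`. -/
theorem dagum_low_frequency_dim_three (δ lam : ℝ) (hδ1 : 1 < δ) (hδ2 : δ < 2)
    (hlam : 0 < lam) (hdl0 : 0 < δ * lam) (hdl2 : δ * lam ≤ 2) :
    ∃ Dh : ℝ → ℝ,
      (∀ z : ℝ, 0 < z →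
        Tendsto (fun T : ℝ =>
            (1 / (2 * Real.pi ^ 2 * z)) * ∫ r in (0 : ℝ)..T, r * Real.sin (z * r) * dagum lam δ r)
          atTop (nhds (Dh z))) ∧
      Tendsto (fun z : ℝ => z ^ (3 - δ) * Dh z) (nhdsWithin 0 (Ioi 0))
        (nhds (2 ^ (-δ) * lam * Real.Gamma ((3 - δ) / 2) /
          (Real.pi ^ ((3 : ℝ) / 2) * Real.Gamma (δ / 2)))) :=
  dagum_low_frequency_dim_three_general hδ1 (hδ2.trans (by norm_num)) hlam.le
end
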